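/- If a sequence of simply connected hyperbolic domains (Ω_n, w_n) converges to (Ω, w) in the sense that the harmonic measures ω_{Ω_n}(w_n, ·) converge weakly to ω_Ω(w, ·) and w_n → w, then for any 0 < d < dist(w, ∂Ω), the disk D(w, d/2) is contained in Ω_n for all sufficiently large n. -/

import Mathlib

/-!
Write `a = d / 2`. If `ball wl a ⊆ Ω n` fails, then, `Ω n` being simply connected, its complement
meets every circle about `wl` of radius at least `a` (`exists_notMem_of_lt`). Choose such points
`s r`, `‖s r - wl‖ = r`, measurably in `r` (`exists_measurable_selection`), and put
`h ζ = ∫ t in [0, ε], (log ‖ζ - s (R + t)‖ - log ‖ζ - s (a + t)‖)`.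
Spreading the logarithmic poles over an interval of radii makes the singularity integrable:
`‖ζ - s (a + t)‖` is at least `|‖ζ - wl‖ - a - t|`. Hence `h` is continuous on `ℂ`
(`continuous_logPot`), bounded by a constant depending only on `a`, `ε`, `R`, and has the mean value
property in `Ω n` (`hasMVP_logPot`), so it is reproduced by the harmonic measure:
`h (w n) = ∫ h ∂(μ n)`.

Fix `d'` with `d < d' < dist(wl, ∂Ωl)`. For small `ε` and large `R`, the values of `h` near `wl`
exceed its supremum outside `ball wl d'` by a fixed amount, because
`‖ζ - s (a + t)‖` is at most about `a` near `wl` and at least about `d' - a > a` outside the ball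
(`exists_test_function`). On the other hand `ν` does not charge the ball of radius
`dist(wl, ∂Ωl)`, so by weak convergence the `μ n`-mass of `ball wl d'` tends to `0`, and
`∫ h ∂(μ n)` is eventually smaller than `h (w n)`. Only finitely many `n` can therefore fail.
-/

open MeasureTheory Metric Filter Topology

noncomputable section

/-- Mean value property over balls: the notion of harmonicity used here. -/
def HasMVP (h : ℂ → ℝ) (Ω : Set ℂ) : Prop :=
  ∀ z ∈ Ω, ∀ r : ℝ, 0 < r → closedBall z r ⊆ Ω →
    h z = ⨍ x in ball z r, h x

/-- `μ` is the harmonic measure of the domain `Ω` at the point `w`: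
a probability measure on `∂Ω` reproducing values of bounded harmonic functions
continuous up to the boundary. -/
def IsHarmonicMeasure (Ω : Set ℂ) (w : ℂ) (μ : Measure ℂ) : Prop :=
  IsProbabilityMeasure μ ∧ μ (frontier Ω)ᶜ = 0 ∧
  ∀ h : ℂ → ℝ, ContinuousOn h (closure Ω) → (∃ M, ∀ x, |h x| ≤ M) →
    HasMVP h Ω → h w = ∫ x, h x ∂μ

/-- Carathéodory convergence of pointed domains. -/
def CaratheodoryConv (Ω : ℕ → Set ℂ) (w : ℕ → ℂ) (Ωl : Set ℂ) (wl : ℂ) : Prop :=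
  Tendsto w atTop (nhds wl) ∧
  (∀ K : Set ℂ, IsCompact K → K ⊆ Ωl → ∀ᶠ n in atTop, K ⊆ Ω n) ∧
  (∀ U : Set ℂ, IsOpen U → IsConnected U → wl ∈ U →
    (∃ᶠ n in atTop, U ⊆ Ω n) → U ⊆ Ωl)

/-- `(Ω n, w n)` and `(Ωl, wl)` have arbitrarily good common interior approximations. -/
def CommonInteriorApprox (Ω : ℕ → Set ℂ) (w : ℕ → ℂ) (Ωl : Set ℂ) (wl : ℂ) : Prop :=
  Tendsto w atTop (nhds wl) ∧
  ∀ ε : ℝ, 0 < ε → ∃ N : ℕ, ∃ K : Set ℂ, IsClosed K ∧ IsConnected K ∧ wl ∈ K ∧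
    K ⊆ Ωl ∧ (∀ n, N ≤ n → K ⊆ Ω n) ∧
    ∀ x ∈ frontier K, infDist x (frontier Ωl) < ε ∧
      ∀ n, N ≤ n → infDist x (frontier (Ω n)) < ε

/-- Weak convergence of measures: integrals of bounded continuous functions converge. -/
def WeakConv (μ : ℕ → Measure ℂ) (ν : Measure ℂ) : Prop :=
  ∀ f : BoundedContinuousFunction ℂ ℝ, Tendsto (fun n => ∫ x, f x ∂(μ n)) atTop (nhds (∫ x, f x ∂ν))

/-- Uniform regularity of a sequence of domains, expressed via the families
`μ n z` of harmonic measures of `Ω n` at `z`. -/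
def UniformlyRegular (Ω : ℕ → Set ℂ) (μ : ℕ → ℂ → Measure ℂ) : Prop :=
  ∀ δ : ℝ, 0 < δ → ∃ ε : ℝ, 0 < ε ∧ ∀ n, ∀ z ∈ Ω n,
    infDist z (frontier (Ω n)) < ε → ENNReal.ofReal (1 - δ) < μ n z (ball z δ)

/-- A domain is regular iff the support of its harmonic measure (at any interior
point) is the whole boundary. -/
def IsRegularDomain (Ω : Set ℂ) (ν : ℂ → Measure ℂ) : Prop :=
  ∀ w ∈ Ω, ∀ x ∈ frontier Ω, ∀ r : ℝ, 0 < r → 0 < ν w (ball x r)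

/-! ### Points of the complement on circles -/

/-- The only use of simple connectivity: a circle around `c` that encloses a point `z ∉ Ω` leaves
`Ω`. Otherwise a branch of `log (x - z)` on `Ω` would be a primitive of `1 / (x - z)` along the
circle, whereas that integral equals `2πi`. -/
lemma exists_notMem_of_lt {Ω : Set ℂ} (ho : IsOpen Ω) (hsc : SimplyConnectedSpace Ω) {z c : ℂ}
    (hz : z ∉ Ω) {r : ℝ} (hr : ‖z - c‖ < r) : ∃ x, x ∉ Ω ∧ ‖x - c‖ = r := by
  by_contra! H
  have hr0 : 0 < r := (norm_nonneg _).trans_lt hr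
  have hsph : ∀ x, ‖x - c‖ = r → x ∈ Ω := fun x hx => by
    by_contra hx'; exact H x hx' hx
  obtain ⟨L, hLc, hL⟩ := Complex.exists_continuousOn_eqOn_exp_comp
    (U := Ω) (g := fun x => x - z) hsc ho
    (by fun_prop) (by rintro ⟨x, hx, h⟩; exact hz (by rwa [sub_eq_zero.1 h] at hx))
  have hder : ∀ x ∈ sphere c r, HasDerivWithinAt L ((x - z)⁻¹) (sphere c r) x := by
    intro x hx
    have hxΩ : x ∈ Ω := hsph x (by simpa [dist_eq_norm] using hx)
    have hnb : Ω ∈ 𝓝 x := ho.mem_nhds hxΩ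
    have hx1 : Complex.exp (L x) = x - z := hL hxΩ
    have h1 : HasDerivAt (fun y => Complex.exp y + z) (x - z) (L x) := by
      rw [← hx1]; exact (Complex.hasDerivAt_exp _).add_const z
    refine (HasDerivAt.of_local_left_inverse (hLc.continuousAt hnb) h1 ?_ ?_).hasDerivWithinAt
    · rw [← hx1]; exact Complex.exp_ne_zero _
    · filter_upwards [hnb] with y hy
      have : Complex.exp (L y) = y - z := hL hy
      rw [this]; ring
  have h0 := circleIntegral.integral_eq_zero_of_hasDerivWithinAt hr0.le hder
  have h1 := circleIntegral.integral_sub_inv_of_mem_ball (c := c) (w := z) (R := r)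
    (by simpa [dist_eq_norm] using hr)
  rw [h1] at h0
  exact Complex.two_pi_I_ne_zero h0

/-- A closed set meeting every circle of radius at least `a` about `c` contains one point on each,
chosen measurably in the radius: the least admissible angle is lower semicontinuous. -/
lemma exists_measurable_selection {F : Set ℂ} (hF : IsClosed F) (c : ℂ) {a : ℝ} (ha : 0 ≤ a)
    (h : ∀ r, a ≤ r → ∃ x ∈ F, ‖x - c‖ = r) :
    ∃ s : ℝ → ℂ, Measurable s ∧ ∀ r, a ≤ r → s r ∈ F ∧ ‖s r - c‖ = r := by
  -- `max r a` keeps the set of admissible angles nonempty for all real `r`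
  set A : ℝ → Set ℝ := fun r => {θ | θ ∈ Set.Icc (-Real.pi) Real.pi ∧ circleMap c (max r a) θ ∈ F}
    with hA
  have hcont : Continuous fun p : ℝ × ℝ => circleMap c (max p.2 a) p.1 := by
    unfold circleMap; fun_prop
  have hne : ∀ r, (A r).Nonempty := by
    intro r
    obtain ⟨x, hx, hxr⟩ := h (max r a) (le_max_right _ _)
    refine ⟨Complex.arg (x - c), ⟨(Complex.neg_pi_lt_arg _).le, Complex.arg_le_pi _⟩, ?_⟩
    have : circleMap c (max r a) (Complex.arg (x - c)) = x := by
      rw [circleMap, ← hxr, Complex.norm_mul_exp_arg_mul_I]; ring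
    rwa [this]
  have hclosed : ∀ r, IsClosed (A r) := fun r =>
    isClosed_Icc.inter (hF.preimage (hcont.comp (by fun_prop : Continuous fun θ => (θ, r))))
  have hbdd : ∀ r, BddBelow (A r) := fun r => ⟨-Real.pi, fun θ hθ => hθ.1.1⟩
  have hmem : ∀ r, sInf (A r) ∈ A r := fun r => (hclosed r).csInf_mem (hne r) (hbdd r)
  have hlsc : LowerSemicontinuous fun r => sInf (A r) := by
    rw [lowerSemicontinuous_iff_isClosed_preimage]
    intro y
    have hset : (fun r => sInf (A r)) ⁻¹' Set.Iic y =
        Prod.snd '' {p : Set.Icc (-Real.pi) Real.pi × ℝ |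
          (p.1 : ℝ) ≤ y ∧ circleMap c (max p.2 a) p.1 ∈ F} := by
      ext r
      constructor
      · intro hr
        exact ⟨(⟨sInf (A r), (hmem r).1⟩, r), ⟨hr, (hmem r).2⟩, rfl⟩
      · rintro ⟨⟨θ, r'⟩, ⟨h1, h2⟩, rfl⟩
        exact (csInf_le (hbdd _) ⟨θ.2, h2⟩).trans h1
    rw [hset]
    refine isClosedMap_snd_of_compactSpace _ ?_
    refine (isClosed_le
      (by fun_prop : Continuous fun p : Set.Icc (-Real.pi) Real.pi × ℝ => (p.1 : ℝ))
      continuous_const).inter (hF.preimage ?_)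
    exact hcont.comp (by fun_prop : Continuous fun p : Set.Icc (-Real.pi) Real.pi × ℝ =>
      ((p.1 : ℝ), p.2))
  refine ⟨fun r => circleMap c (max r a) (sInf (A r)), ?_, ?_⟩
  · exact hcont.measurable.comp (hlsc.measurable.prodMk measurable_id)
  · intro r hr
    refine ⟨(hmem r).2, ?_⟩
    simp [circleMap, max_eq_left hr, abs_of_nonneg (ha.trans hr)]

/-! ### Estimates for differences of logarithms -/

/-- The bound is integrable in `y` near `0`, and small uniformly when `C` is small; it follows from
`log (1 + v) ≤ 2 √v`. -/
lemma log_sub_log_le {x y C : ℝ} (hx : 0 < x) (hy : 0 < y) (hC : 0 ≤ C) (h : x - y ≤ C) :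
    Real.log x - Real.log y ≤ 2 * √C * y ^ (-(1 / 2) : ℝ) := by
  have hv : 0 ≤ C / y := by positivity
  have h1 : x / y ≤ 1 + C / y := by
    rw [div_le_iff₀ hy, add_mul, div_mul_cancel₀ _ hy.ne']; linarith
  have h2 : Real.log (1 + C / y) ≤ 2 * √(C / y) := by
    have h3 : 1 + C / y ≤ (1 + √(C / y)) ^ 2 := by
      nlinarith [Real.sq_sqrt hv, Real.sqrt_nonneg (C / y)]
    calc Real.log (1 + C / y) ≤ Real.log ((1 + √(C / y)) ^ 2) :=
          Real.log_le_log (by positivity) h3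
      _ = 2 * Real.log (1 + √(C / y)) := by rw [Real.log_pow]; norm_num
      _ ≤ 2 * √(C / y) := by
          have := Real.log_le_sub_one_of_pos (show 0 < 1 + √(C / y) by positivity)
          linarith
  rw [← Real.log_div hx.ne' hy.ne']
  calc Real.log (x / y) ≤ Real.log (1 + C / y) := Real.log_le_log (by positivity) h1
    _ ≤ 2 * √(C / y) := h2
    _ = _ := by
      rw [Real.sqrt_div hC, Real.rpow_neg hy.le, ← Real.sqrt_eq_rpow]; ring

/-- Two-sided form of `log_sub_log_le`, with `x` and `y` replaced by lower bounds `u` and `v` on the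
right. -/
lemma abs_log_sub_log_le {x y C u v : ℝ} (hu : 0 < u) (hv : 0 < v) (hux : u ≤ x) (hvy : v ≤ y)
    (hC : 0 ≤ C) (h : |x - y| ≤ C) :
    |Real.log x - Real.log y| ≤ 2 * √C * (u ^ (-(1 / 2) : ℝ) + v ^ (-(1 / 2) : ℝ)) := by
  have hx := hu.trans_le hux
  have hy := hv.trans_le hvy
  have h1 := log_sub_log_le hx hy hC (abs_le.1 h).2
  have h2 := log_sub_log_le hy hx hC (by linarith [(abs_le.1 h).1])
  have h3 : x ^ (-(1 / 2) : ℝ) ≤ u ^ (-(1 / 2) : ℝ) :=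
    Real.rpow_le_rpow_of_nonpos hu hux (by norm_num)
  have h4 : y ^ (-(1 / 2) : ℝ) ≤ v ^ (-(1 / 2) : ℝ) :=
    Real.rpow_le_rpow_of_nonpos hv hvy (by norm_num)
  have h5 : 0 < u ^ (-(1 / 2) : ℝ) := Real.rpow_pos_of_pos hu _
  have h6 : 0 < v ^ (-(1 / 2) : ℝ) := Real.rpow_pos_of_pos hv _
  have h7 : 0 ≤ 2 * √C := by positivity
  rw [abs_le]
  constructor <;> nlinarith

/-- `|c - t| ^ (-1/2)` is integrable in `t` over `[0, ε]`, with integral bounded independently of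
the location `c` of the singularity. -/
lemma exists_integral_rpow_bound (ε : ℝ) (hε : 0 ≤ ε) :
    ∃ K : ℝ, 0 ≤ K ∧ ∀ c : ℝ,
      IntegrableOn (fun t => |c - t| ^ (-(1 / 2) : ℝ)) (Set.Icc 0 ε) ∧
      ∫ t in Set.Icc 0 ε, |c - t| ^ (-(1 / 2) : ℝ) ≤ K := by
  set g : ℝ → ℝ := (Set.Icc (-1) 1).indicator fun x => |x| ^ (-(1 / 2) : ℝ) with hg
  have hgi : Integrable g := by
    rw [hg, integrable_indicator_iff measurableSet_Icc]
    have hp : IntervalIntegrable (fun x : ℝ => |x| ^ (-(1 / 2) : ℝ)) volume 0 1 := by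
      refine (intervalIntegral.intervalIntegrable_rpow' (r := -(1 / 2)) (by norm_num)).congr ?_
      intro x hx
      rw [Set.uIoc_of_le zero_le_one] at hx
      simp [abs_of_pos hx.1]
    have hn : IntervalIntegrable (fun x : ℝ => |x| ^ (-(1 / 2) : ℝ)) volume (-1) 0 := by
      have := hp.comp_sub_left 0
      simpa using this.symm
    rw [integrableOn_Icc_iff_integrableOn_Ioc]
    exact (intervalIntegrable_iff_integrableOn_Ioc_of_le (by norm_num)).1 (hn.trans hp)
  have hg0 : ∀ x, 0 ≤ g x := fun x => Set.indicator_nonneg (fun _ _ => by positivity) x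
  have hle : ∀ x : ℝ, |x| ^ (-(1 / 2) : ℝ) ≤ g x + 1 := by
    intro x
    by_cases hx : x ∈ Set.Icc (-1 : ℝ) 1
    · simp [hg, Set.indicator_of_mem hx]
    · have : 1 ≤ |x| := by
        by_contra! h'
        exact hx ⟨(abs_le.1 h'.le).1, (abs_le.1 h'.le).2⟩
      have := Real.rpow_le_one_of_one_le_of_nonpos this (show (-(1 / 2) : ℝ) ≤ 0 by norm_num)
      linarith [hg0 x]
  refine ⟨(∫ x, g x) + ε, add_nonneg (integral_nonneg hg0) hε, fun c => ?_⟩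
  have hgc : Integrable fun t => g (c - t) := hgi.comp_sub_left c
  have hi2 : IntegrableOn (fun t => g (c - t) + 1) (Set.Icc 0 ε) :=
    hgc.integrableOn.add (integrableOn_const (by simp))
  have hi1 : IntegrableOn (fun t => |c - t| ^ (-(1 / 2) : ℝ)) (Set.Icc 0 ε) := by
    refine hi2.mono' (Measurable.aestronglyMeasurable (by fun_prop)) (ae_of_all _ fun t => ?_)
    rw [Real.norm_of_nonneg (by positivity)]
    exact hle _
  refine ⟨hi1, (setIntegral_mono hi1 hi2 fun t => hle _).trans ?_⟩
  rw [integral_add hgc.integrableOn (integrableOn_const (by simp))]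
  have : ∫ t in Set.Icc 0 ε, g (c - t) ≤ ∫ x, g x := by
    rw [← integral_sub_left_eq_self g volume c]
    exact setIntegral_le_integral hgc (ae_of_all _ fun t => hg0 _)
  simp [hε]
  linarith

/-! ### Logarithmic potentials with one point on each circle -/

/-- The logarithmic potential at `ζ` of the image of Lebesgue measure on `[0, ε]` under the
curve `σ`, with the sign for which it tends to `+∞` at infinity. -/
def logPot (σ : ℝ → ℂ) (ε : ℝ) (ζ : ℂ) : ℝ := ∫ t in Set.Icc 0 ε, Real.log ‖ζ - σ t‖

/-- The radial projection about `c` does not increase distances, so a singularity at `s` is no worse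
than one on a straight radius; this takes the place of the Beurling projection theorem. -/
lemma abs_radial_le {c ζ s : ℂ} {b t : ℝ} (h : ‖s - c‖ = b + t) :
    |‖ζ - c‖ - b - t| ≤ ‖ζ - s‖ := by
  have := abs_norm_sub_norm_le (ζ - c) (s - c)
  rw [h, ← sub_sub, sub_sub_sub_cancel_right] at this
  exact this

lemma ae_radial_ne (ρ : ℝ) (S : Set ℝ) : ∀ᵐ t ∂(volume.restrict S), 0 < |ρ - t| := by
  have : ∀ᵐ t ∂(volume.restrict S), t ≠ ρ := Measure.ae_ne _ _
  filter_upwards [this] with t ht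
  exact abs_pos.2 (sub_ne_zero.2 ht.symm)

lemma abs_log_max_sub_log_le {c ζ s : ℂ} {b t δ : ℝ} (h : ‖s - c‖ = b + t) (hδ : 0 < δ)
    (hne : 0 < |‖ζ - c‖ - b - t|) :
    |Real.log (max ‖ζ - s‖ δ) - Real.log ‖ζ - s‖| ≤
      4 * √δ * |‖ζ - c‖ - b - t| ^ (-(1 / 2) : ℝ) := by
  have h1 := abs_radial_le (ζ := ζ) h
  have := abs_log_sub_log_le hne hne (h1.trans (le_max_left _ δ)) h1 hδ.le (by
    rw [abs_of_nonneg (by simp)]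
    have := norm_nonneg (ζ - s)
    rcases max_cases ‖ζ - s‖ δ with h | h <;> linarith)
  linarith

lemma abs_log_max_le {x δ B : ℝ} (hδ : 0 < δ) (hx : x ≤ B) (hB : 0 ≤ B) :
    |Real.log (max x δ)| ≤ |Real.log δ| + (B + δ) := by
  have h1 : Real.log δ ≤ Real.log (max x δ) := Real.log_le_log hδ (le_max_right _ _)
  have h2 : Real.log (max x δ) ≤ max x δ := Real.log_le_self (hδ.le.trans (le_max_right _ _))
  have h3 : max x δ ≤ B + δ := max_le (by linarith) (by linarith)
  rw [abs_le]
  constructor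
  · linarith [neg_abs_le (Real.log δ)]
  · linarith [abs_nonneg (Real.log δ)]

lemma integrableOn_log_max {σ : ℝ → ℂ} (hσ : Measurable σ) {c : ℂ} {b ε : ℝ} (hb : 0 ≤ b)
    (hε : 0 ≤ ε)
    (hs : ∀ t ∈ Set.Icc 0 ε, ‖σ t - c‖ = b + t) {δ : ℝ} (hδ : 0 < δ) (ζ : ℂ) :
    IntegrableOn (fun t => Real.log (max ‖ζ - σ t‖ δ)) (Set.Icc 0 ε) := by
  refine Measure.integrableOn_of_bounded (M := |Real.log δ| + ((‖ζ - c‖ + b + ε) + δ))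
    (by simp) (Measurable.aestronglyMeasurable (by fun_prop)) ?_
  filter_upwards [ae_restrict_mem measurableSet_Icc] with t ht
  refine abs_log_max_le hδ ?_ (by positivity)
  have : ‖ζ - σ t‖ ≤ ‖ζ - c‖ + ‖σ t - c‖ := by
    rw [← sub_sub_sub_cancel_right ζ (σ t) c]; exact norm_sub_le _ _
  linarith [hs t ht, ht.2]

lemma integrableOn_log {σ : ℝ → ℂ} (hσ : Measurable σ) {c : ℂ} {b ε : ℝ} (hb : 0 ≤ b)
    (hε : 0 ≤ ε)
    (hs : ∀ t ∈ Set.Icc 0 ε, ‖σ t - c‖ = b + t) (ζ : ℂ) :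
    IntegrableOn (fun t => Real.log ‖ζ - σ t‖) (Set.Icc 0 ε) := by
  obtain ⟨K, -, hK⟩ := exists_integral_rpow_bound ε hε
  have h1 := integrableOn_log_max hσ hb hε hs one_pos ζ
  have h2 : IntegrableOn (fun t => Real.log (max ‖ζ - σ t‖ 1) - Real.log ‖ζ - σ t‖)
      (Set.Icc 0 ε) := by
    refine Integrable.mono' ((hK (‖ζ - c‖ - b)).1.const_mul (4 * √1))
      (Measurable.aestronglyMeasurable (by fun_prop)) ?_
    filter_upwards [ae_restrict_mem measurableSet_Icc, ae_radial_ne (‖ζ - c‖ - b) (Set.Icc 0 ε)]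
      with t ht hne
    exact abs_log_max_sub_log_le (hs t ht) one_pos hne
  simpa [Pi.sub_def] using h1.sub h2

/-- The truncations `∫ log (max ‖ζ - σ t‖ δ)` are continuous in `ζ` and converge to the potential
uniformly as `δ → 0`. -/
lemma continuous_logPot {σ : ℝ → ℂ} (hσ : Measurable σ) {c : ℂ} {b ε : ℝ} (hb : 0 ≤ b)
    (hε : 0 ≤ ε) (hs : ∀ t ∈ Set.Icc 0 ε, ‖σ t - c‖ = b + t) :
    Continuous (logPot σ ε) := by
  obtain ⟨K, hK0, hK⟩ := exists_integral_rpow_bound ε hε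
  refine continuous_of_uniform_approx_of_continuous fun u hu => ?_
  obtain ⟨η, hη, hηu⟩ := Metric.mem_uniformity_dist.1 hu
  obtain ⟨δ, hδ, hδη⟩ : ∃ δ : ℝ, 0 < δ ∧ 4 * √δ * K < η := by
    refine ⟨(η / (4 * (K + 1))) ^ 2, by positivity, ?_⟩
    rw [Real.sqrt_sq (by positivity)]
    have : 4 * (η / (4 * (K + 1))) * K = η * (K / (K + 1)) := by field_simp
    rw [this]
    have : K / (K + 1) < 1 := by rw [div_lt_one (by positivity)]; linarith
    nlinarith
  refine ⟨fun ζ => ∫ t in Set.Icc 0 ε, Real.log (max ‖ζ - σ t‖ δ), ?_, fun ζ => hηu ?_⟩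
  · refine continuous_iff_continuousAt.2 fun ζ₀ => ?_
    refine continuousAt_of_dominated
      (bound := fun _ => |Real.log δ| + ((‖ζ₀ - c‖ + 1 + b + ε) + δ)) ?_ ?_ ?_ ?_
    · exact Eventually.of_forall fun ζ => Measurable.aestronglyMeasurable (by fun_prop)
    · filter_upwards [ball_mem_nhds ζ₀ one_pos] with ζ hζ
      filter_upwards [ae_restrict_mem measurableSet_Icc] with t ht
      refine abs_log_max_le hδ ?_ (by positivity)
      have h1 : ‖ζ - σ t‖ ≤ ‖ζ - c‖ + ‖σ t - c‖ := by
        rw [← sub_sub_sub_cancel_right ζ (σ t) c]; exact norm_sub_le _ _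
      have h2 : ‖ζ - c‖ ≤ ‖ζ - ζ₀‖ + ‖ζ₀ - c‖ := norm_sub_le_norm_sub_add_norm_sub _ _ _
      rw [mem_ball, dist_eq_norm] at hζ
      linarith [hs t ht, ht.2]
    · exact integrableOn_const (by simp)
    · refine ae_of_all _ fun t => ?_
      refine ContinuousAt.log (by fun_prop) (lt_max_of_lt_right hδ).ne'
  · rw [dist_comm, Real.dist_eq, logPot, ← integral_sub (integrableOn_log_max hσ hb hε hs hδ ζ)
      (integrableOn_log hσ hb hε hs ζ)]
    refine lt_of_le_of_lt ?_ hδη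
    have h1 := hK (‖ζ - c‖ - b)
    calc _ ≤ ∫ t in Set.Icc 0 ε, 4 * √δ * |‖ζ - c‖ - b - t| ^ (-(1 / 2) : ℝ) := by
          rw [← Real.norm_eq_abs]
          refine norm_integral_le_of_norm_le (h1.1.const_mul _) ?_
          filter_upwards [ae_restrict_mem measurableSet_Icc,
            ae_radial_ne (‖ζ - c‖ - b) (Set.Icc 0 ε)] with t ht hne
          exact abs_log_max_sub_log_le (hs t ht) hδ hne
      _ ≤ 4 * √δ * K := by
          rw [integral_const_mul]
          exact mul_le_mul_of_nonneg_left h1.2 (by positivity)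

/-! ### Mean value property of logarithmic potentials -/

/-- The mean value property over circles implies the one over balls, by polar coordinates. -/
lemma setIntegral_ball_of_circleAverage {f : ℂ → ℝ} {z : ℂ} {r : ℝ} (hr : 0 < r)
    (hf : ContinuousOn f (closedBall z r))
    (havg : ∀ ρ, 0 < ρ → ρ < r → Real.circleAverage f z ρ = f z) :
    ∫ x in ball z r, f x = Real.pi * r ^ 2 * f z := by
  have hpi := Real.pi_pos
  have hmap : ∀ p : ℝ × ℝ, z + Complex.polarCoord.symm p = circleMap z p.1 p.2 := by
    intro p
    rw [Complex.polarCoord_symm_apply, circleMap, Complex.exp_mul_I]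
    push_cast; rfl
  have hcm : Continuous fun p : ℝ × ℝ => circleMap z p.1 p.2 := by
    unfold circleMap; fun_prop
  have h_int : IntegrableOn (fun p : ℝ × ℝ => p.1 * f (circleMap z p.1 p.2))
      (Set.Ioo 0 r ×ˢ Set.Ioo (-Real.pi) Real.pi) (volume.prod volume) := by
    have hc : ContinuousOn (fun p : ℝ × ℝ => p.1 * f (circleMap z p.1 p.2))
        (Set.Icc 0 r ×ˢ Set.Icc (-Real.pi) Real.pi) := by
      refine continuousOn_fst.mul (hf.comp hcm.continuousOn ?_)
      intro p hp
      simp only [mem_closedBall, dist_eq_norm, circleMap_sub_center, norm_circleMap_zero]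
      rw [abs_of_nonneg hp.1.1]; exact hp.1.2
    exact (hc.integrableOn_compact (isCompact_Icc.prod isCompact_Icc)).mono_set
      (Set.prod_mono Set.Ioo_subset_Icc_self Set.Ioo_subset_Icc_self)
  calc ∫ x in ball z r, f x = ∫ x, (ball z r).indicator f x :=
        (integral_indicator measurableSet_ball).symm
    _ = ∫ x, (ball z r).indicator f (z + x) := (integral_add_left_eq_self _ z).symm
    _ = ∫ p in polarCoord.target, p.1 • (ball z r).indicator f (circleMap z p.1 p.2) := by
        rw [← Complex.integral_comp_polarCoord_symm]; simp_rw [hmap]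
    _ = ∫ p in polarCoord.target, (Set.Ioo 0 r ×ˢ Set.Ioo (-Real.pi) Real.pi).indicator
          (fun p : ℝ × ℝ => p.1 * f (circleMap z p.1 p.2)) p := by
        refine setIntegral_congr_fun polarCoord.open_target.measurableSet fun p hp => ?_
        rw [polarCoord_target] at hp
        have h0 : 0 < p.1 := hp.1
        have hiff : circleMap z p.1 p.2 ∈ ball z r ↔
            p ∈ Set.Ioo 0 r ×ˢ Set.Ioo (-Real.pi) Real.pi := by
          simp only [mem_ball, dist_eq_norm, circleMap_sub_center, norm_circleMap_zero,
            abs_of_pos h0]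
          exact ⟨fun h => ⟨⟨h0, h⟩, hp.2⟩, fun h => h.1.2⟩
        by_cases h : circleMap z p.1 p.2 ∈ ball z r
        · simp only [Set.indicator_of_mem h, Set.indicator_of_mem (hiff.1 h), smul_eq_mul]
        · simp only [Set.indicator_of_notMem h, Set.indicator_of_notMem (mt hiff.2 h), smul_zero]
    _ = ∫ p in Set.Ioo 0 r ×ˢ Set.Ioo (-Real.pi) Real.pi, p.1 * f (circleMap z p.1 p.2) := by
        rw [setIntegral_indicator (measurableSet_Ioo.prod measurableSet_Ioo), polarCoord_target,
          Set.inter_eq_right.2 (Set.prod_mono Set.Ioo_subset_Ioi_self subset_rfl)]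
    _ = ∫ ρ in Set.Ioo 0 r, ∫ θ in Set.Ioo (-Real.pi) Real.pi, ρ * f (circleMap z ρ θ) :=
        setIntegral_prod _ h_int
    _ = ∫ ρ in Set.Ioo 0 r, ρ * (2 * Real.pi * f z) := by
        refine setIntegral_congr_fun measurableSet_Ioo fun ρ hρ => ?_
        rw [integral_const_mul, ← havg ρ hρ.1 hρ.2, Real.circleAverage_def, smul_eq_mul,
          mul_inv_cancel_left₀ (by positivity), ← integral_Ioc_eq_integral_Ioo,
          ← intervalIntegral.integral_of_le (by linarith)]
        have hper : Function.Periodic (fun θ => f (circleMap z ρ θ)) (2 * Real.pi) :=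
          fun θ => by simp only [periodic_circleMap z ρ θ]
        have := hper.intervalIntegral_add_eq (-Real.pi) 0
        rw [zero_add, show -Real.pi + 2 * Real.pi = Real.pi by ring] at this
        rw [this]
    _ = Real.pi * r ^ 2 * f z := by
        rw [integral_mul_const, ← integral_Ioc_eq_integral_Ioo,
          ← intervalIntegral.integral_of_le hr.le, integral_id]
        ring

/-- Harmonicity of `x ↦ log ‖x - s‖` away from `s`. -/
lemma setIntegral_ball_log {z s : ℂ} {r : ℝ} (hr : 0 < r) (hs : s ∉ closedBall z r) :
    ∫ x in ball z r, Real.log ‖x - s‖ = Real.pi * r ^ 2 * Real.log ‖z - s‖ := by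
  have hne : ∀ x ∈ closedBall z r, x - s ≠ 0 := fun x hx h => hs (sub_eq_zero.1 h ▸ hx)
  refine setIntegral_ball_of_circleAverage (f := fun x => Real.log ‖x - s‖) hr ?_ ?_
  · exact ContinuousOn.log (by fun_prop) fun x hx => norm_ne_zero_iff.2 (hne x hx)
  · intro ρ hρ hρr
    refine InnerProductSpace.HarmonicOnNhd.circleAverage_eq fun x hx => ?_
    refine AnalyticAt.harmonicAt_log_norm (f := fun x => x - s) (by fun_prop) (hne x ?_)
    rw [abs_of_pos hρ] at hx
    exact closedBall_subset_closedBall hρr.le hx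

/-- A potential of points outside `Ω` has the mean value property over balls in `Ω`, by Fubini. -/
lemma hasMVP_logPot {Ω : Set ℂ} (ho : IsOpen Ω) {σ : ℝ → ℂ} (hσ : Measurable σ) {c : ℂ}
    {b ε : ℝ} (hb : 0 ≤ b) (hε : 0 ≤ ε) (hs : ∀ t ∈ Set.Icc 0 ε, ‖σ t - c‖ = b + t)
    (hΩ : ∀ t ∈ Set.Icc 0 ε, σ t ∉ Ω) {z : ℂ} {r : ℝ} (hr : 0 < r) (hsub : closedBall z r ⊆ Ω) :
    ∫ x in ball z r, logPot σ ε x = Real.pi * r ^ 2 * logPot σ ε z := by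
  obtain ⟨δ, hδ, hδsub⟩ := (isCompact_closedBall z r).exists_thickening_subset_open ho hsub
  have hfar : ∀ x ∈ ball z r, ∀ t ∈ Set.Icc 0 ε, δ ≤ ‖x - σ t‖ := by
    intro x hx t ht
    by_contra! h
    refine hΩ t ht (hδsub (mem_thickening_iff.2 ⟨x, ball_subset_closedBall hx, ?_⟩))
    rwa [dist_comm, dist_eq_norm]
  have h_int : Integrable (Function.uncurry fun (x : ℂ) (t : ℝ) => Real.log ‖x - σ t‖)
      ((volume.restrict (ball z r)).prod (volume.restrict (Set.Icc 0 ε))) := by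
    rw [Measure.prod_restrict]
    refine Measure.integrableOn_of_bounded
      (M := |Real.log δ| + ((r + ‖z - c‖ + b + ε) + δ)) ?_
      (Measurable.aestronglyMeasurable (by unfold Function.uncurry; fun_prop)) ?_
    · rw [Measure.prod_prod]
      exact ENNReal.mul_ne_top measure_ball_lt_top.ne (by simp)
    · filter_upwards [ae_restrict_mem (measurableSet_ball.prod measurableSet_Icc)]
      rintro ⟨x, t⟩ ⟨hx, ht⟩
      have h0 := hfar x hx t ht
      have h1 : ‖x - σ t‖ ≤ ‖x - c‖ + ‖σ t - c‖ := by
        rw [← sub_sub_sub_cancel_right x (σ t) c]; exact norm_sub_le _ _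
      have h2 : ‖x - c‖ ≤ ‖x - z‖ + ‖z - c‖ := norm_sub_le_norm_sub_add_norm_sub _ _ _
      have hx' := hx
      rw [mem_ball, dist_eq_norm] at hx'
      have := abs_log_max_le (x := ‖x - σ t‖) (B := r + ‖z - c‖ + b + ε) hδ
        (by linarith [hs t ht, ht.2]) (by positivity)
      rwa [max_eq_left h0] at this
  unfold logPot
  rw [integral_integral_swap h_int, ← integral_const_mul]
  refine setIntegral_congr_fun measurableSet_Icc fun t ht => ?_
  exact setIntegral_ball_log hr fun h => hΩ t ht (hsub h)

/-! ### The test function and the conclusion -/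

/-- For a simply connected `Ω` omitting a point `z` of `ball c a`, the difference `h` of the
potentials of points of `Ωᶜ` on the circles of radius `R + t` and of radius `a + t` about `c`,
`t ∈ [0, ε]`. The far potential makes `h` bounded, the near one makes `h` smaller outside `ball c d'`
than near `c` once `R` is large. The bound `M` depends on `a`, `ε`, `R` only, not on `Ω`, so `h`
may be used along a sequence of domains. -/
lemma exists_test_function {a ε R d' : ℝ} (ha : 0 < a) (hε : 0 < ε) (haR : a ≤ R) (hR1 : 1 ≤ R)
    (hεR : ε < R) (hεa : ε < a) (hd' : a + ε < d') :
    ∃ M : ℝ, ∀ (Ω : Set ℂ) (c z : ℂ), IsOpen Ω → SimplyConnectedSpace Ω → z ∉ Ω → ‖z - c‖ < a →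
      ∃ h : ℂ → ℝ, Continuous h ∧ (∀ ζ, |h ζ| ≤ M) ∧ HasMVP h Ω ∧
        (∀ ζ, d' ≤ ‖ζ - c‖ → h ζ ≤ ε * Real.log ((d' + R + ε) / (d' - a - ε))) ∧
        (∀ ζ, ‖ζ - c‖ ≤ ε → ε * Real.log ((R - ε) / (a + 2 * ε)) ≤ h ζ) := by
  obtain ⟨K, hK0, hK⟩ := exists_integral_rpow_bound ε hε.le
  set C : ℝ := R + a + 2 * ε with hC
  have hC0 : 0 ≤ C := by positivity
  refine ⟨2 * √C * (K + K), fun Ω c z ho hsc hz hza => ?_⟩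
  obtain ⟨s, hsm, hs⟩ := exists_measurable_selection ho.isClosed_compl c ha.le
    fun r hr => exists_notMem_of_lt ho hsc hz (hza.trans_le hr)
  set σ₁ : ℝ → ℂ := fun t => s (R + t) with hσ₁
  set σ₂ : ℝ → ℂ := fun t => s (a + t) with hσ₂
  have hm₁ : Measurable σ₁ := hsm.comp (measurable_const_add R)
  have hm₂ : Measurable σ₂ := hsm.comp (measurable_const_add a)
  have hs₁ : ∀ t ∈ Set.Icc 0 ε, ‖σ₁ t - c‖ = R + t := fun t ht => (hs _ (by linarith [ht.1])).2
  have hs₂ : ∀ t ∈ Set.Icc 0 ε, ‖σ₂ t - c‖ = a + t := fun t ht => (hs _ (by linarith [ht.1])).2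
  have hΩ₁ : ∀ t ∈ Set.Icc 0 ε, σ₁ t ∉ Ω := fun t ht => (hs _ (by linarith [ht.1])).1
  have hΩ₂ : ∀ t ∈ Set.Icc 0 ε, σ₂ t ∉ Ω := fun t ht => (hs _ (by linarith [ht.1])).1
  have hR0 : 0 ≤ R := ha.le.trans haR
  have hc₁ := continuous_logPot hm₁ hR0 hε.le hs₁
  have hc₂ := continuous_logPot hm₂ ha.le hε.le hs₂
  have hi₁ := integrableOn_log hm₁ hR0 hε.le hs₁
  have hi₂ := integrableOn_log hm₂ ha.le hε.le hs₂
  have hh : ∀ ζ, logPot σ₁ ε ζ - logPot σ₂ ε ζ =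
      ∫ t in Set.Icc 0 ε, (Real.log ‖ζ - σ₁ t‖ - Real.log ‖ζ - σ₂ t‖) := fun ζ =>
    (integral_sub (hi₁ ζ) (hi₂ ζ)).symm
  have hconst : ∀ y : ℝ, ∫ _ in Set.Icc 0 ε, y = ε * y := fun y => by simp [hε.le]
  have hup : ∀ ζ s : ℂ, ‖ζ - s‖ ≤ ‖ζ - c‖ + ‖s - c‖ := fun ζ s => by
    rw [← sub_sub_sub_cancel_right ζ s c]; exact norm_sub_le _ _
  refine ⟨fun ζ => logPot σ₁ ε ζ - logPot σ₂ ε ζ, hc₁.sub hc₂, fun ζ => ?_, ?_, fun ζ hζ => ?_,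
    fun ζ hζ => ?_⟩
  · have h1 := hK (‖ζ - c‖ - R)
    have h2 := hK (‖ζ - c‖ - a)
    simp only [hh]
    rw [← Real.norm_eq_abs]
    calc _ ≤ ∫ t in Set.Icc 0 ε, 2 * √C * (|‖ζ - c‖ - R - t| ^ (-(1 / 2) : ℝ) +
            |‖ζ - c‖ - a - t| ^ (-(1 / 2) : ℝ)) := by
          refine norm_integral_le_of_norm_le ((h1.1.add h2.1).const_mul _) ?_
          filter_upwards [ae_restrict_mem measurableSet_Icc,
            ae_radial_ne (‖ζ - c‖ - R) (Set.Icc 0 ε),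
            ae_radial_ne (‖ζ - c‖ - a) (Set.Icc 0 ε)] with t ht hne₁ hne₂
          refine abs_log_sub_log_le hne₁ hne₂ (abs_radial_le (hs₁ t ht))
            (abs_radial_le (hs₂ t ht)) hC0 ?_
          have h3 := abs_norm_sub_norm_le (ζ - σ₁ t) (ζ - σ₂ t)
          rw [sub_sub_sub_cancel_left] at h3
          have h4 := hup (σ₂ t) (σ₁ t)
          rw [hs₁ t ht, hs₂ t ht] at h4
          linarith [ht.2]
      _ ≤ 2 * √C * (K + K) := by
          rw [integral_const_mul, integral_add h1.1 h2.1]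
          exact mul_le_mul_of_nonneg_left (add_le_add h1.2 h2.2) (by positivity)
  · intro x hx r hr hsub
    have h1 := hasMVP_logPot ho hm₁ hR0 hε.le hs₁ hΩ₁ hr hsub
    have h2 := hasMVP_logPot ho hm₂ ha.le hε.le hs₂ hΩ₂ hr hsub
    have h_int : ∀ {f : ℂ → ℝ}, Continuous f → IntegrableOn f (ball x r) := fun hf =>
      (hf.continuousOn.integrableOn_compact (isCompact_closedBall x r)).mono_set
        ball_subset_closedBall
    have hvol : volume.real (ball x r) = Real.pi * r ^ 2 := by
      rw [Measure.real, Complex.volume_ball, ENNReal.toReal_mul, ENNReal.toReal_pow,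
        ENNReal.toReal_ofReal hr.le, ENNReal.coe_toReal, NNReal.coe_real_pi, mul_comm]
    rw [setAverage_eq, integral_sub (h_int hc₁) (h_int hc₂), h1, h2, hvol, ← mul_sub, smul_eq_mul,
      inv_mul_cancel_left₀ (by have := Real.pi_pos; positivity)]
  · simp only [hh]
    rw [← hconst]
    refine setIntegral_mono_on ((hi₁ ζ).sub (hi₂ ζ)) (integrableOn_const (by simp))
      measurableSet_Icc fun t ht => ?_
    have hlow := (le_abs_self _).trans (abs_radial_le (ζ := ζ) (hs₂ t ht))
    have hupp := hup ζ (σ₁ t)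
    rw [hs₁ t ht] at hupp
    have ht2 := ht.2
    set ρ := ‖ζ - c‖
    have hq : 0 < ρ - a - ε := by linarith
    have h1 : Real.log ‖ζ - σ₁ t‖ ≤ Real.log (ρ + R + ε) := by
      rcases (norm_nonneg (ζ - σ₁ t)).eq_or_lt with h | h
      -- here the logarithm takes the value `log 0 = 0`, still below the bound since `1 ≤ R`
      · rw [← h, Real.log_zero]; exact Real.log_nonneg (by linarith)
      · exact Real.log_le_log h (by linarith)
    have h2 : Real.log (ρ - a - ε) ≤ Real.log ‖ζ - σ₂ t‖ := Real.log_le_log hq (by linarith)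
    have h3 : Real.log (ρ + R + ε) - Real.log (ρ - a - ε) ≤
        Real.log ((d' + R + ε) / (d' - a - ε)) := by
      rw [← Real.log_div (by linarith) hq.ne']
      refine Real.log_le_log (div_pos (by linarith) hq) ?_
      rw [div_le_div_iff₀ hq (by linarith)]
      nlinarith
    linarith
  · simp only [hh]
    rw [← hconst]
    refine setIntegral_mono_on (integrableOn_const (by simp)) ((hi₁ ζ).sub (hi₂ ζ))
      measurableSet_Icc fun t ht => ?_
    have hlow := (neg_le_abs _).trans (abs_radial_le (ζ := ζ) (hs₁ t ht))
    have hlow₂ := (neg_le_abs _).trans (abs_radial_le (ζ := ζ) (hs₂ t ht))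
    have hupp := hup ζ (σ₂ t)
    rw [hs₂ t ht] at hupp
    have ht1 := ht.1
    have ht2 := ht.2
    have h1 : Real.log (R - ε) ≤ Real.log ‖ζ - σ₁ t‖ :=
      Real.log_le_log (by linarith) (by linarith)
    have h2 : Real.log ‖ζ - σ₂ t‖ ≤ Real.log (a + 2 * ε) := by
      exact Real.log_le_log (by linarith) (by linarith)
    rw [Real.log_div (by linarith) (by positivity)]
    linarith

/-- If harmonic measures of simply connected hyperbolic domains `(Ω n, w n)`
converge weakly to that of `(Ωl, wl)` and `w n → wl`, then for any
`0 < d < dist(wl, ∂Ωl)` the disk `D(wl, d/2)` is contained in `Ω n` for all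
large `n`. -/
theorem measureConv_implies_disk_containment
    (Ω : ℕ → Set ℂ) (w : ℕ → ℂ) (Ωl : Set ℂ) (wl : ℂ)
    (hopen : ∀ n, IsOpen (Ω n)) (hconn : ∀ n, IsConnected (Ω n))
    (hsc : ∀ n, SimplyConnectedSpace (Ω n))
    (hhyp : ∀ n, (Ω n)ᶜ.Nonempty) (hw : ∀ n, w n ∈ Ω n)
    (hopenl : IsOpen Ωl) (hconnl : IsConnected Ωl)
    (hscl : SimplyConnectedSpace Ωl)
    (hhypl : Ωlᶜ.Nonempty) (hwl : wl ∈ Ωl)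
    (μ : ℕ → Measure ℂ) (ν : Measure ℂ)
    (hμ : ∀ n, IsHarmonicMeasure (Ω n) (w n) (μ n))
    (hν : IsHarmonicMeasure Ωl wl ν)
    (hwconv : Tendsto w atTop (nhds wl))
    (hweak : WeakConv μ ν) :
    ∀ d : ℝ, 0 < d → d < infDist wl (frontier Ωl) →
      ∀ᶠ n in atTop, ball wl (d / 2) ⊆ Ω n := by
  intro d hd hdD
  set D := infDist wl (frontier Ωl) with hD
  obtain ⟨a, ha⟩ : ∃ a, a = d / 2 := ⟨_, rfl⟩
  obtain ⟨ε, hεdef⟩ : ∃ ε, ε = min ((D - d) / 16) (a / 2) := ⟨_, rfl⟩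
  obtain ⟨d', hd'⟩ : ∃ d', d' = 2 * a + 8 * ε := ⟨_, rfl⟩
  have ha0 : 0 < a := by linarith
  have hε : 0 < ε := by rw [hεdef]; exact lt_min (by linarith) (by linarith)
  have hεD : ε ≤ (D - d) / 16 := hεdef.le.trans (min_le_left _ _)
  have hεa : ε ≤ a / 2 := hεdef.le.trans (min_le_right _ _)
  have hd'D : d' < D := by linarith
  obtain ⟨Q, hQ⟩ : ∃ Q, Q = (ε * (a + 7 * ε) + (2 * a + 9 * ε) * (a + 2 * ε)) / (5 * ε) := ⟨_, rfl⟩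
  have hQ0 : 0 < Q := by rw [hQ]; positivity
  have hQ5 : 5 * ε * Q = ε * (a + 7 * ε) + (2 * a + 9 * ε) * (a + 2 * ε) := by
    rw [hQ]; field_simp
  -- As `R → ∞` the two bounds of `exists_test_function` differ by about
  -- `ε * log ((d' - a - ε) / (a + 2 * ε))`, which is positive because `d' = 2 * a + 8 * ε`;
  -- `Q` makes this explicit, so the test function is larger near `wl` than off `ball wl d'`.
  obtain ⟨R, hR⟩ : ∃ R, R = 1 + a + ε + Q := ⟨_, rfl⟩
  have hgap : (d' + R + ε) / (d' - a - ε) < (R - ε) / (a + 2 * ε) := by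
    rw [div_lt_div_iff₀ (by linarith) (by positivity)]
    have : 5 * ε * Q < 5 * ε * R := mul_lt_mul_of_pos_left (by linarith) (by positivity)
    subst hd'
    nlinarith
  obtain ⟨M, hM⟩ := exists_test_function (R := R) (d' := d') ha0 hε (by linarith) (by linarith)
    (by linarith) (by linarith) (by linarith)
  obtain ⟨m₁, hm₁⟩ : ∃ m, m = ε * Real.log ((d' + R + ε) / (d' - a - ε)) := ⟨_, rfl⟩
  obtain ⟨m₀, hm₀⟩ : ∃ m, m = ε * Real.log ((R - ε) / (a + 2 * ε)) := ⟨_, rfl⟩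
  rw [← hm₁, ← hm₀] at hM
  have hm : m₁ < m₀ := by
    rw [hm₁, hm₀]
    exact mul_lt_mul_of_pos_left
      (Real.log_lt_log (div_pos (by linarith) (by linarith)) hgap) hε
  -- a cut-off function equal to `1` on `ball wl d'` and to `0` outside `ball wl D`
  let f : BoundedContinuousFunction ℂ ℝ := BoundedContinuousFunction.ofNormedAddCommGroup
    (fun x => max 0 (min 1 ((D - ‖x - wl‖) / (D - d')))) (by fun_prop) 1 (fun x => by
      rw [Real.norm_of_nonneg (le_max_left _ _)]
      exact max_le zero_le_one (min_le_left _ _))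
  have hf : ∀ x, f x = max 0 (min 1 ((D - ‖x - wl‖) / (D - d'))) := fun x => rfl
  have hf0 : ∀ x, 0 ≤ f x := fun x => le_max_left _ _
  have hf1 : ∀ x, ‖x - wl‖ ≤ d' → f x = 1 := fun x hx => by
    have : 1 ≤ (D - ‖x - wl‖) / (D - d') := by rw [le_div_iff₀ (by linarith)]; linarith
    rw [hf, min_eq_left this]; simp
  have hfν : ∫ x, f x ∂ν = 0 := by
    refine integral_eq_zero_of_ae ?_
    have hfr : ∀ᵐ x ∂ν, x ∈ frontier Ωl := hν.2.1
    filter_upwards [hfr] with x hx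
    have h1 : D ≤ ‖x - wl‖ := by
      rw [← dist_eq_norm, dist_comm]; exact infDist_le_dist_of_mem hx
    have h2 : (D - ‖x - wl‖) / (D - d') ≤ 0 :=
      div_nonpos_of_nonpos_of_nonneg (by linarith) (by linarith)
    rw [hf, Pi.zero_apply]
    exact max_eq_left ((min_le_right _ _).trans h2)
  have hlim : Tendsto (fun n => (M + |m₁|) * ∫ x, f x ∂(μ n)) atTop (𝓝 0) := by
    have := (hweak f).const_mul (M + |m₁|)
    rwa [hfν, mul_zero] at this
  filter_upwards [hlim.eventually (gt_mem_nhds (sub_pos.2 hm)), hwconv (ball_mem_nhds wl hε)]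
    with n hn hwn
  by_contra hsub
  obtain ⟨z, hz, hzΩ⟩ := Set.not_subset.1 hsub
  rw [mem_ball, dist_eq_norm, ← ha] at hz
  obtain ⟨h, hhc, hhM, hmvp, hout, hin⟩ := hM (Ω n) wl z (hopen n) (hsc n) hzΩ hz
  obtain ⟨hprob, -, hrep⟩ := hμ n
  have h_int : Integrable h (μ n) := Integrable.of_bound hhc.aestronglyMeasurable M
    (ae_of_all _ hhM)
  have h1 : h (w n) = ∫ x, h x ∂(μ n) := hrep h hhc.continuousOn ⟨M, hhM⟩ hmvp
  have h2 : m₀ ≤ h (w n) := hin _ (by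
    have : w n ∈ ball wl ε := hwn
    rw [mem_ball, dist_eq_norm] at this
    exact this.le)
  have hM0 : 0 ≤ M := (abs_nonneg _).trans (hhM 0)
  -- `h ≤ m₁` where `d' ≤ ‖x - wl‖`, and elsewhere `f = 1` absorbs the bound `M`
  have h3 : ∀ x, h x ≤ m₁ + (M + |m₁|) * f x := by
    intro x
    rcases le_total d' ‖x - wl‖ with hx | hx
    · have := mul_nonneg (add_nonneg hM0 (abs_nonneg m₁)) (hf0 x)
      linarith [hout x hx]
    · rw [hf1 x hx]
      linarith [le_abs_self (h x), hhM x, neg_abs_le m₁]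
  have h4 : ∫ x, h x ∂(μ n) ≤ m₁ + (M + |m₁|) * ∫ x, f x ∂(μ n) := by
    have hfi : Integrable (fun x => (M + |m₁|) * f x) (μ n) := (f.integrable (μ n)).const_mul _
    calc _ ≤ ∫ x, (m₁ + (M + |m₁|) * f x) ∂(μ n) :=
          integral_mono h_int ((integrable_const _).add hfi) h3
      _ = _ := by
          rw [integral_add (integrable_const _) hfi, integral_const_mul]; simp
  linarith
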